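/- Fix x ∈ ℝ and let h_n = (c_n x + d_n)^{1/2} with c_n = 2 − 2b_n^{−2} and d_n = b_n² − 2b_n^{−2}, defined for n large enough that c_n x + d_n > 0. Then as n → ∞, 1 − Φ(h_n) = n^{−1} e^{−x} ( 1 + b_n^{−4} (7/2 + 3x + x²) − b_n^{−6} (43/3 + 14x + 6x² + (4/3) x³) + O(b_n^{−8}) ). -/

import Mathlib

open Real Filter Topology

/-- The standard normal distribution function. -/
noncomputable def stdNormalCDF (x : ℝ) : ℝ :=
  ∫ u in Set.Iic x, Real.exp (-u ^ 2 / 2) / Real.sqrt (2 * Real.pi)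

/-!
Put `e = b_n⁻²`. Then `h_n² = w / e` with `w = 1 + 2xe - 2(1+x)e²`, and since
`n = √(2π) b_n exp(b_n² / 2)` and `b_n² / 2 + x - h_n² / 2 = (1 + x) e`, the normalized tail is
`n eˣ (1 - Φ(h_n)) = exp((1 + x) e) · w ^ (-1/2) · h_n R(h_n)`, with `R` the Mills ratio. Repeated
integration by parts gives `y R(y) = ∑_{k < N} (-1)ᵏ (2k - 1)‼ y⁻²ᵏ + O(y⁻²ᴺ)`. At `y = h_n` the
right-hand side is a power series in `e / w`, so for `N = 4` everything is an expansion in powers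
of `e` up to `O(e⁴)`; the norming constants are such that the coefficient of `e` vanishes.
-/

/-- `f e = p e + O(e ^ N)` as `e → 0`. The degree of `p` is not bounded: only its coefficients below
`N` matter (`HasExpansion.congr_coeff`), so that products and compositions need no truncation. -/
def HasExpansion {𝕜 : Type*} [NormedField 𝕜] (N : ℕ) (f : 𝕜 → 𝕜) (p : Polynomial 𝕜) : Prop :=
  (fun e => f e - p.eval e) =O[𝓝 0] fun e => e ^ N

namespace HasExpansion

open Polynomial Asymptotics

variable {𝕜 : Type*} [NormedField 𝕜] {N : ℕ} {f g : 𝕜 → 𝕜} {p q : 𝕜[X]}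

lemma polynomial_eval (N : ℕ) (p : 𝕜[X]) : HasExpansion N (fun e => p.eval e) p := by
  simpa only [HasExpansion, sub_self] using isBigO_zero _ _

lemma add (hf : HasExpansion N f p) (hg : HasExpansion N g q) :
    HasExpansion N (fun e => f e + g e) (p + q) :=
  (IsBigO.add hf hg).congr_left fun e => by rw [eval_add]; ring

lemma isBigO_one (hf : HasExpansion N f p) : f =O[𝓝 0] fun _ => (1 : 𝕜) := by
  have hpow : (fun e : 𝕜 => e ^ N) =O[𝓝 0] fun _ => (1 : 𝕜) :=
    (continuous_pow N).continuousAt.isBigO_one 𝕜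
  have hp : (fun e => p.eval e) =O[𝓝 0] fun _ => (1 : 𝕜) := p.continuous.continuousAt.isBigO_one 𝕜
  exact ((IsBigO.trans hf hpow).add hp).congr_left fun e => sub_add_cancel _ _

lemma mul (hf : HasExpansion N f p) (hg : HasExpansion N g q) :
    HasExpansion N (fun e => f e * g e) (p * q) := by
  have hp := (polynomial_eval N p).isBigO_one
  have hsum := ((IsBigO.mul hf hg.isBigO_one).congr_right fun e => mul_one _).add
    ((hp.mul hg).congr_right fun e => one_mul _)
  exact hsum.congr_left fun e => by rw [eval_mul]; ring

lemma polynomial_comp (hf : HasExpansion N f p) (q : 𝕜[X]) :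
    HasExpansion N (fun e => q.eval (f e)) (q.comp p) := by
  induction q using Polynomial.induction_on with
  | C a => simpa using polynomial_eval N (C a)
  | add q₁ q₂ h₁ h₂ => simpa only [eval_add, add_comp] using h₁.add h₂
  | monomial k a h =>
    simpa only [pow_succ, ← mul_assoc, mul_X_comp, eval_mul_X] using h.mul hf

lemma comp_polynomial (hf : HasExpansion N f p) (hq : q.coeff 0 = 0) :
    HasExpansion N (fun e => f (q.eval e)) (p.comp q) := by
  obtain ⟨r, rfl⟩ := X_dvd_iff.2 hq
  have hlim : Tendsto (fun e => (X * r).eval e) (𝓝 0) (𝓝 0) :=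
    (X * r).continuous.tendsto' 0 0 (by simp)
  have hq_le : (fun e => (X * r).eval e) =O[𝓝 0] fun e => e := by
    simpa using (isBigO_refl (fun e : 𝕜 => e) (𝓝 0)).mul (polynomial_eval N r).isBigO_one
  simpa only [HasExpansion, eval_comp] using! (hf.comp_tendsto hlim).trans (hq_le.pow N)

lemma congr_coeff (hf : HasExpansion N f p) (hpq : ∀ k < N, p.coeff k = q.coeff k) :
    HasExpansion N f q := by
  obtain ⟨r, hr⟩ : X ^ N ∣ p - q := X_pow_dvd_iff.2 fun k hk => by
    rw [coeff_sub, hpq k hk, sub_self]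
  have hdiff : (fun e => (p - q).eval e) =O[𝓝 0] fun e => e ^ N := by
    simpa [hr] using
      (isBigO_refl (fun e : 𝕜 => e ^ N) (𝓝 0)).mul (polynomial_eval N r).isBigO_one
  exact (IsBigO.add hf hdiff).congr_left fun e => by rw [eval_sub, sub_add_sub_cancel]

end HasExpansion

section TaylorExpansions

open Polynomial Nat

lemma hasExpansion_of_hasFPowerSeriesAt {𝕜 : Type*} [NontriviallyNormedField 𝕜] {f : 𝕜 → 𝕜}
    {c : ℕ → 𝕜} (hf : HasFPowerSeriesAt f (.ofScalars 𝕜 c) 0) (N : ℕ) :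
    HasExpansion N f (∑ k ∈ Finset.range N, C (c k) * X ^ k) := by
  simpa only [HasExpansion, FormalMultilinearSeries.partialSum, zero_add, smul_eq_mul,
    FormalMultilinearSeries.ofScalars_apply_eq, eval_finsetSum, eval_mul, eval_C, eval_pow, eval_X,
    ← norm_pow, Asymptotics.isBigO_norm_right]
    using hf.isBigO_sub_partialSum_pow N

lemma hasExpansion_exp (N : ℕ) :
    HasExpansion N Real.exp (∑ k ∈ Finset.range N, C (k ! : ℝ)⁻¹ * X ^ k) := by
  simpa [HasExpansion, eval_finsetSum, div_eq_inv_mul] using Real.exp_sub_sum_range_isBigO_pow N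

lemma hasExpansion_one_add_rpow (r : ℝ) (N : ℕ) :
    HasExpansion N (fun t => (1 + t) ^ r) (∑ k ∈ Finset.range N, C (Ring.choose r k) * X ^ k) :=
  hasExpansion_of_hasFPowerSeriesAt Real.one_add_rpow_hasFPowerSeriesAt_zero N

lemma hasExpansion_exp_mul (a : ℝ) (N : ℕ) :
    HasExpansion N (fun e => Real.exp (a * e))
      (∑ k ∈ Finset.range N, C (a ^ k / k !) * X ^ k) := by
  have hcomp := (hasExpansion_exp N).comp_polynomial (q := C a * X) (by simp)
  simpa only [eval_mul, eval_C, eval_X, Polynomial.sum_comp, mul_comp, C_comp, pow_comp, X_comp,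
    mul_pow, ← C_pow, ← mul_assoc, ← C_mul, inv_mul_eq_div] using hcomp

lemma ringChoose_succ (r : ℝ) (k : ℕ) :
    Ring.choose r (k + 1) = Ring.choose r k * (r - k) / (k + 1) := by
  have h := Ring.choose_smul_choose r (Nat.le_succ k)
  simp only [Nat.succ_eq_add_one, Nat.choose_succ_self_right, Nat.add_sub_cancel_left,
    Ring.choose_one_right, nsmul_eq_mul, Nat.cast_add, Nat.cast_one] at h
  rw [eq_div_iff k.cast_add_one_ne_zero, mul_comm, h]

lemma mul_coeff_two {R : Type*} [Semiring R] (p q : R[X]) :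
    (p * q).coeff 2 = p.coeff 0 * q.coeff 2 + p.coeff 1 * q.coeff 1 + p.coeff 2 * q.coeff 0 := by
  simp [coeff_mul, Finset.Nat.antidiagonal_succ, add_assoc]

lemma mul_coeff_three {R : Type*} [Semiring R] (p q : R[X]) :
    (p * q).coeff 3 = p.coeff 0 * q.coeff 3 + p.coeff 1 * q.coeff 2 + p.coeff 2 * q.coeff 1 +
      p.coeff 3 * q.coeff 0 := by
  simp [coeff_mul, Finset.Nat.antidiagonal_succ, add_assoc]

lemma hasExpansion_one_add_quadratic_rpow (a c r : ℝ) :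
    HasExpansion 4 (fun e => (1 + a * e + c * e ^ 2) ^ r)
      (1 + C (r * a) * X + C (r * c + r * (r - 1) / 2 * a ^ 2) * X ^ 2 +
        C (r * (r - 1) * a * c + r * (r - 1) * (r - 2) / 6 * a ^ 3) * X ^ 3) := by
  have hcomp := (hasExpansion_one_add_rpow r 4).comp_polynomial (q := C a * X + C c * X ^ 2)
    (by simp)
  simp only [eval_add, eval_mul, eval_C, eval_X, eval_pow, ← add_assoc] at hcomp
  refine hcomp.congr_coeff fun k hk => ?_
  interval_cases k <;>
    simp only [Finset.sum_range_succ, Finset.sum_range_zero, ringChoose_succ,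
      Ring.choose_zero_right, add_comp, mul_comp, C_comp, X_comp, one_comp, zero_comp, pow_succ,
      pow_zero, coeff_add, mul_coeff_zero, mul_coeff_one, mul_coeff_two, mul_coeff_three, coeff_X,
      coeff_C, coeff_one, coeff_zero] <;>
    norm_num
  all_goals ring

end TaylorExpansions

section MillsRatio

open MeasureTheory Set Nat

/-- The tail moment `∫_y^∞ u⁻ᵐ e^{-u²/2} du` of negative order; integration by parts relates orders
`m` and `m + 2`. -/
noncomputable def gaussianNegMoment (m : ℕ) (y : ℝ) : ℝ :=
  ∫ u in Ioi y, Real.exp (-u ^ 2 / 2) * u⁻¹ ^ m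

/-- The Mills ratio `(1 - Φ y) / φ y` of the standard normal law, with the factor `√(2π)`
cancelled. -/
noncomputable def millsRatio (y : ℝ) : ℝ :=
  Real.exp (y ^ 2 / 2) * gaussianNegMoment 0 y

lemma integrable_exp_neg_sq_div_two : Integrable fun u : ℝ => Real.exp (-u ^ 2 / 2) := by
  simpa only [neg_mul, one_div_mul_eq_div, neg_div] using
    integrable_exp_neg_mul_sq (one_half_pos (α := ℝ))

lemma one_sub_stdNormalCDF (y : ℝ) :
    1 - stdNormalCDF y = (√(2 * π))⁻¹ * Real.exp (-y ^ 2 / 2) * millsRatio y := by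
  have hint := integrable_exp_neg_sq_div_two.div_const √(2 * π)
  have hone : ∫ u : ℝ, Real.exp (-u ^ 2 / 2) / √(2 * π) = 1 := by
    simpa [ProbabilityTheory.gaussianPDFReal, div_eq_inv_mul] using
      ProbabilityTheory.integral_gaussianPDFReal_eq_one 0 one_ne_zero
  have hexp : Real.exp (-y ^ 2 / 2) * Real.exp (y ^ 2 / 2) = 1 := by
    rw [← Real.exp_add, neg_div, neg_add_cancel, Real.exp_zero]
  calc 1 - stdNormalCDF y = ∫ u in Ioi y, Real.exp (-u ^ 2 / 2) / √(2 * π) := by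
        rw [stdNormalCDF, ← hone, ← setIntegral_compl measurableSet_Iic hint, compl_Iic]
    _ = (√(2 * π))⁻¹ * gaussianNegMoment 0 y := by
        simp only [gaussianNegMoment, pow_zero, mul_one, div_eq_inv_mul,
          integral_const_mul]
    _ = _ := by rw [millsRatio, mul_assoc, ← mul_assoc (Real.exp _), hexp, one_mul]

lemma hasDerivAt_neg_exp_mul_inv_pow (m : ℕ) {y : ℝ} (hy : y ≠ 0) :
    HasDerivAt (fun u : ℝ => -(Real.exp (-u ^ 2 / 2) * u⁻¹ ^ (m + 1)))
      (Real.exp (-y ^ 2 / 2) * y⁻¹ ^ m + (m + 1) * (Real.exp (-y ^ 2 / 2) * y⁻¹ ^ (m + 2))) y := by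
  have hexp : HasDerivAt (fun u : ℝ => Real.exp (-u ^ 2 / 2)) (Real.exp (-y ^ 2 / 2) * -y) y := by
    refine (((hasDerivAt_pow 2 y).fun_neg.div_const 2).congr_deriv ?_).exp
    push_cast; ring
  refine (hexp.mul ((hasDerivAt_inv hy).pow (m + 1))).neg.congr_deriv ?_
  simp only [Pi.pow_apply, Nat.add_sub_cancel, ← inv_pow]
  push_cast
  linear_combination Real.exp (-y ^ 2 / 2) * y⁻¹ ^ m * mul_inv_cancel₀ hy

lemma tendsto_neg_exp_mul_inv_pow (m : ℕ) :
    Tendsto (fun u : ℝ => -(Real.exp (-u ^ 2 / 2) * u⁻¹ ^ (m + 1))) atTop (𝓝 0) := by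
  have hinv : Tendsto (fun u : ℝ => u⁻¹ ^ (m + 1)) atTop (𝓝 0) := by
    simpa using (tendsto_inv_atTop_zero (𝕜 := ℝ)).pow (m + 1)
  have hle (u : ℝ) : Real.exp (-u ^ 2 / 2) ≤ 1 := Real.exp_le_one_iff.2 (by nlinarith [sq_nonneg u])
  simpa using (bdd_le_mul_tendsto_zero' 1 (.of_forall fun u => by
    rw [abs_of_pos (Real.exp_pos _)]; exact hle u) hinv).neg

lemma integrableOn_exp_mul_inv_pow (m : ℕ) {y : ℝ} (hy : 0 < y) :
    IntegrableOn (fun u : ℝ => Real.exp (-u ^ 2 / 2) * u⁻¹ ^ m) (Ioi y) := by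
  refine integrable_exp_neg_sq_div_two.integrableOn.mul_bdd (c := y⁻¹ ^ m)
    (by fun_prop) ?_
  filter_upwards [ae_restrict_mem measurableSet_Ioi] with u (hu : y < u)
  have : 0 < u := hy.trans hu
  rw [norm_pow, norm_inv, Real.norm_of_nonneg this.le]
  gcongr

lemma gaussianNegMoment_add (m : ℕ) {y : ℝ} (hy : 0 < y) :
    gaussianNegMoment m y + (m + 1) * gaussianNegMoment (m + 2) y =
      Real.exp (-y ^ 2 / 2) * y⁻¹ ^ (m + 1) := by
  have hm := integrableOn_exp_mul_inv_pow m hy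
  have hm2 := (integrableOn_exp_mul_inv_pow (m + 2) hy).const_mul ((m : ℝ) + 1)
  have hftc := integral_Ioi_of_hasDerivAt_of_tendsto'
    (fun u (hu : y ≤ u) => hasDerivAt_neg_exp_mul_inv_pow m (hy.trans_le hu).ne') (hm.add hm2)
    (tendsto_neg_exp_mul_inv_pow m)
  rwa [integral_add hm hm2, integral_const_mul, zero_sub, neg_neg] at hftc

lemma gaussianNegMoment_nonneg (m : ℕ) {y : ℝ} (hy : 0 ≤ y) : 0 ≤ gaussianNegMoment m y :=
  setIntegral_nonneg measurableSet_Ioi fun u (hu : y < u) => by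
    have := hy.trans_lt hu
    positivity

lemma gaussianNegMoment_le (m : ℕ) {y : ℝ} (hy : 0 < y) :
    gaussianNegMoment m y ≤ Real.exp (-y ^ 2 / 2) * y⁻¹ ^ (m + 1) := by
  rw [← gaussianNegMoment_add m hy]
  exact le_add_of_nonneg_right (mul_nonneg (by positivity) (gaussianNegMoment_nonneg _ hy.le))

lemma gaussianNegMoment_zero_eq_sum_add (N : ℕ) {y : ℝ} (hy : 0 < y) :
    gaussianNegMoment 0 y =
      Real.exp (-y ^ 2 / 2) *
          ∑ k ∈ Finset.range N, (-1) ^ k * ((2 * k - 1)‼ : ℝ) * y⁻¹ ^ (2 * k + 1) +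
        (-1) ^ N * ((2 * N - 1)‼ : ℝ) * gaussianNegMoment (2 * N) y := by
  induction N with
  | zero => simp
  | succ N ih =>
    have hparts := gaussianNegMoment_add (2 * N) hy
    have hfact : ((2 * (N + 1) - 1)‼ : ℝ) = (2 * N + 1) * ((2 * N - 1)‼ : ℝ) := by
      rw [show 2 * (N + 1) - 1 = 2 * N + 1 by lia, doubleFactorial_add_one]
      push_cast; ring
    rw [ih, Finset.sum_range_succ, hfact, mul_add 2 N 1]
    push_cast at hparts ⊢
    linear_combination (-1) ^ N * ((2 * N - 1)‼ : ℝ) * hparts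

lemma abs_mul_millsRatio_sub_sum_le (N : ℕ) {y : ℝ} (hy : 0 < y) :
    |y * millsRatio y - ∑ k ∈ Finset.range N, (-1) ^ k * ((2 * k - 1)‼ : ℝ) * ((y ^ 2)⁻¹) ^ k| ≤
      ((2 * N - 1)‼ : ℝ) * ((y ^ 2)⁻¹) ^ N := by
  have hexp : Real.exp (y ^ 2 / 2) * Real.exp (-y ^ 2 / 2) = 1 := by
    rw [← Real.exp_add, neg_div, add_neg_cancel, Real.exp_zero]
  have hpow (k : ℕ) : y * y⁻¹ ^ (2 * k + 1) = ((y ^ 2)⁻¹) ^ k := by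
    rw [pow_succ, pow_mul, inv_pow]; field_simp
  have hremainder : y * millsRatio y -
      ∑ k ∈ Finset.range N, (-1) ^ k * ((2 * k - 1)‼ : ℝ) * ((y ^ 2)⁻¹) ^ k =
        (-1) ^ N * (((2 * N - 1)‼ : ℝ) *
          (y * Real.exp (y ^ 2 / 2) * gaussianNegMoment (2 * N) y)) := by
    simp only [millsRatio, gaussianNegMoment_zero_eq_sum_add N hy, ← hpow, mul_left_comm _ y,
      ← Finset.mul_sum]
    linear_combination (y * ∑ k ∈ Finset.range N,
      (-1) ^ k * ((2 * k - 1)‼ : ℝ) * y⁻¹ ^ (2 * k + 1)) * hexp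
  have hnonneg := gaussianNegMoment_nonneg (2 * N) hy.le
  rw [hremainder, abs_mul, abs_neg_one_pow, one_mul, abs_of_nonneg (by positivity)]
  gcongr
  calc y * Real.exp (y ^ 2 / 2) * gaussianNegMoment (2 * N) y
      ≤ y * Real.exp (y ^ 2 / 2) * (Real.exp (-y ^ 2 / 2) * y⁻¹ ^ (2 * N + 1)) := by
        gcongr; exact gaussianNegMoment_le _ hy
    _ = ((y ^ 2)⁻¹) ^ N := by linear_combination hpow N + y * y⁻¹ ^ (2 * N + 1) * hexp

end MillsRatio

section RescaledTail

open Polynomial Asymptotics Set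

/-- The quotient `h_n² / b_n² = (c_n x + d_n) / b_n²` as a function of `e = b_n⁻²`; all expansions
are taken in this variable. -/
noncomputable def sqNormRatio (x e : ℝ) : ℝ :=
  1 + 2 * x * e + -2 * (1 + x) * e ^ 2

lemma hasExpansion_millsSeries_div_sqNormRatio (x : ℝ) :
    HasExpansion 4
      (fun e => ∑ k ∈ Finset.range 4,
        (-1) ^ k * ((2 * k - 1).doubleFactorial : ℝ) * (e * sqNormRatio x e ^ (-1 : ℝ)) ^ k)
      (1 - X + C (3 + 2 * x) * X ^ 2 - C (17 + 14 * x + 4 * x ^ 2) * X ^ 3) := by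
  have hquot := (HasExpansion.polynomial_eval 4 X).mul
    (hasExpansion_one_add_quadratic_rpow (2 * x) (-2 * (1 + x)) (-1))
  have hseries := hquot.polynomial_comp
    (∑ k ∈ Finset.range 4, C ((-1) ^ k * ((2 * k - 1).doubleFactorial : ℝ)) * X ^ k)
  simp only [eval_finsetSum, eval_mul, eval_C, eval_pow, eval_X] at hseries
  refine hseries.congr_coeff fun k hk => ?_
  interval_cases k <;>
    simp only [Finset.sum_range_succ, Finset.sum_range_zero, add_comp, mul_comp, C_comp, X_comp,
      one_comp, zero_comp, pow_succ, pow_zero, coeff_add, coeff_sub, mul_coeff_zero, mul_coeff_one,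
      mul_coeff_two, mul_coeff_three, coeff_X, coeff_C, coeff_one, coeff_zero,
      Nat.doubleFactorial] <;>
    norm_num
  all_goals ring

lemma hasExpansion_rescaledMillsSeries (x : ℝ) :
    HasExpansion 4
      (fun e => Real.exp ((1 + x) * e) * sqNormRatio x e ^ (-1 / 2 : ℝ) *
        ∑ k ∈ Finset.range 4,
          (-1) ^ k * ((2 * k - 1).doubleFactorial : ℝ) * (e * sqNormRatio x e ^ (-1 : ℝ)) ^ k)
      (1 + C (7 / 2 + 3 * x + x ^ 2) * X ^ 2 -
        C (43 / 3 + 14 * x + 6 * x ^ 2 + 4 / 3 * x ^ 3) * X ^ 3) := by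
  have hprod := ((hasExpansion_exp_mul (1 + x) 4).mul
    (hasExpansion_one_add_quadratic_rpow (2 * x) (-2 * (1 + x)) (-1 / 2))).mul
    (hasExpansion_millsSeries_div_sqNormRatio x)
  refine hprod.congr_coeff fun k hk => ?_
  interval_cases k <;>
    simp only [Finset.sum_range_succ, Finset.sum_range_zero, coeff_add, coeff_sub, mul_coeff_zero,
      mul_coeff_one, mul_coeff_two, mul_coeff_three, coeff_X_pow, coeff_X, coeff_C, coeff_one,
      coeff_zero, Nat.factorial] <;>
    norm_num
  all_goals ring

/-- The normalized tail `n eˣ (1 - Φ(h_n))` as a function of `e = b_n⁻² > 0`; in this variable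
`h_n = √(sqNormRatio x e / e)`. The value at `e = 0` is junk, so limits are taken along `𝓝[>] 0`. -/
noncomputable def rescaledTail (x e : ℝ) : ℝ :=
  Real.exp ((1 + x) * e) * sqNormRatio x e ^ (-1 / 2 : ℝ) *
    (√(sqNormRatio x e / e) * millsRatio √(sqNormRatio x e / e))

lemma eventually_sqNormRatio_pos (x : ℝ) : ∀ᶠ e in 𝓝 0, 0 < sqNormRatio x e := by
  have hcont : Continuous (sqNormRatio x) := by unfold sqNormRatio; fun_prop
  exact (hcont.tendsto' 0 1 (by simp [sqNormRatio])).eventually_const_lt one_pos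

lemma isBigO_mul_millsRatio_sqrt_sqNormRatio_div_sub (x : ℝ) (N : ℕ) :
    (fun e => √(sqNormRatio x e / e) * millsRatio √(sqNormRatio x e / e) -
      ∑ k ∈ Finset.range N,
        (-1) ^ k * ((2 * k - 1).doubleFactorial : ℝ) * (e * sqNormRatio x e ^ (-1 : ℝ)) ^ k)
      =O[𝓝[>] 0] fun e => e ^ N := by
  refine IsBigO.trans (g := fun e => (e * sqNormRatio x e ^ (-1 : ℝ)) ^ N)
    (.of_bound ((2 * N - 1).doubleFactorial : ℝ) ?_) (.pow ?_ N)
  · filter_upwards [(eventually_sqNormRatio_pos x).filter_mono nhdsWithin_le_nhds,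
      self_mem_nhdsWithin] with e hw (he : 0 < e)
    have hinv_sq : (√(sqNormRatio x e / e) ^ 2)⁻¹ = e * sqNormRatio x e ^ (-1 : ℝ) := by
      rw [Real.sq_sqrt (by positivity), inv_div, Real.rpow_neg_one, div_eq_mul_inv]
    rw [Real.norm_eq_abs, Real.norm_of_nonneg (by positivity), ← hinv_sq]
    exact abs_mul_millsRatio_sub_sum_le N (Real.sqrt_pos.2 (div_pos hw he))
  · have hinv := (hasExpansion_one_add_quadratic_rpow (2 * x) (-2 * (1 + x)) (-1)).isBigO_one
    simpa only [mul_one] using!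
      (isBigO_refl (fun e : ℝ => e) (𝓝[>] 0)).mul (hinv.mono nhdsWithin_le_nhds)

lemma isBigO_rescaledTail_sub (x : ℝ) :
    (fun e => rescaledTail x e - (1 + (7 / 2 + 3 * x + x ^ 2) * e ^ 2 -
      (43 / 3 + 14 * x + 6 * x ^ 2 + 4 / 3 * x ^ 3) * e ^ 3)) =O[𝓝[>] 0] fun e => e ^ 4 := by
  have hprefactor := ((hasExpansion_exp_mul (1 + x) 4).mul
    (hasExpansion_one_add_quadratic_rpow (2 * x) (-2 * (1 + x)) (-1 / 2))).isBigO_one.mono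
    (nhdsWithin_le_nhds (s := Ioi 0))
  have hmills := hprefactor.mul (isBigO_mul_millsRatio_sqrt_sqNormRatio_div_sub x 4)
  have hseries := (hasExpansion_rescaledMillsSeries x).mono (nhdsWithin_le_nhds (s := Ioi 0))
  refine ((hmills.congr_right fun e => one_mul _).add hseries).congr_left fun e => ?_
  simp only [rescaledTail, sqNormRatio, eval_add, eval_sub, eval_mul, eval_pow, eval_C, eval_X,
    eval_one]
  ring

lemma mul_exp_mul_one_sub_stdNormalCDF_eq_rescaledTail {b n x : ℝ} (hb : 0 < b) (hn : 0 ≤ n)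
    (hbn : 2 * π * b ^ 2 * Real.exp (b ^ 2) = n ^ 2) (hw : 0 < sqNormRatio x (b ^ 2)⁻¹) :
    n * Real.exp x * (1 - stdNormalCDF √(b ^ 2 * sqNormRatio x (b ^ 2)⁻¹)) =
      rescaledTail x (b ^ 2)⁻¹ := by
  have hn_eq : n = √(2 * π) * b * Real.exp (b ^ 2 / 2) := by
    rw [← Real.sqrt_sq hn, ← hbn, Real.sqrt_mul (by positivity), Real.sqrt_mul (by positivity),
      Real.sqrt_sq hb.le, Real.exp_half]
  have hexponent : b ^ 2 / 2 + x + -(b ^ 2 * sqNormRatio x (b ^ 2)⁻¹) / 2 =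
      (1 + x) * (b ^ 2)⁻¹ := by
    rw [sqNormRatio]; field_simp; ring
  have hsqrt : sqNormRatio x (b ^ 2)⁻¹ ^ (-1 / 2 : ℝ) * √(b ^ 2 * sqNormRatio x (b ^ 2)⁻¹) = b := by
    rw [Real.sqrt_mul (by positivity), Real.sqrt_sq hb.le, mul_left_comm, Real.sqrt_eq_rpow,
      ← Real.rpow_add hw]
    norm_num
  rw [rescaledTail, div_inv_eq_mul, mul_comm (sqNormRatio _ _) (b ^ 2), one_sub_stdNormalCDF,
    Real.sq_sqrt (by positivity), ← hexponent, Real.exp_add, Real.exp_add]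
  set h := √(b ^ 2 * sqNormRatio x (b ^ 2)⁻¹)
  have : √(2 * π) ≠ 0 := by positivity
  rw [mul_assoc _ _ (h * _), ← mul_assoc _ h, hsqrt, hn_eq]
  field_simp

lemma tendsto_atTop_of_two_pi_mul_sq_mul_exp_sq_eq {b : ℕ → ℝ}
    (hb : ∀ n : ℕ, 1 ≤ n → 0 < b n ∧ 2 * π * b n ^ 2 * Real.exp (b n ^ 2) = (n : ℝ) ^ 2) :
    Tendsto b atTop atTop := by
  refine tendsto_atTop.2 fun K => ?_
  have hlarge : ∀ᶠ n : ℕ in atTop, 2 * π * K ^ 2 * Real.exp (K ^ 2) < (n : ℝ) ^ 2 :=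
    ((tendsto_pow_atTop two_ne_zero).comp tendsto_natCast_atTop_atTop).eventually_gt_atTop _
  filter_upwards [hlarge, eventually_ge_atTop 1] with n hK hn
  obtain ⟨hpos, heq⟩ := hb n hn
  by_contra! hlt
  rw [← heq] at hK
  refine hK.not_ge ?_
  gcongr

end RescaledTail

/-- With `b_n` the unique positive solution of `2π b_n² exp(b_n²) = n²`,
`c_n = 2 − 2b_n^{−2}`, `d_n = b_n² − 2b_n^{−2}` and `h_n = (c_n x + d_n)^{1/2}`:
`1 − Φ(h_n) = n⁻¹ e^{−x} (1 + b_n^{−4}(7/2 + 3x + x²)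
  − b_n^{−6}(43/3 + 14x + 6x² + (4/3)x³) + O(b_n^{−8}))`. -/
theorem powered_extremes_tail_expansion_t_eq_two
    (b : ℕ → ℝ)
    (hb : ∀ n : ℕ, 1 ≤ n → 0 < b n ∧
      2 * Real.pi * (b n) ^ 2 * Real.exp ((b n) ^ 2) = (n : ℝ) ^ 2)
    (x : ℝ)
    (c d h : ℕ → ℝ)
    (hc : ∀ n : ℕ, c n = 2 - 2 / (b n) ^ 2)
    (hd : ∀ n : ℕ, d n = (b n) ^ 2 - 2 / (b n) ^ 2)
    (hh : ∀ n : ℕ, h n = (c n * x + d n) ^ ((1 : ℝ) / 2)) :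
    ∃ C > (0 : ℝ), ∃ N : ℕ, ∀ n : ℕ, N ≤ n →
      0 < c n * x + d n ∧
      |(n : ℝ) * Real.exp x * (1 - stdNormalCDF (h n)) -
        (1 + (7 / 2 + 3 * x + x ^ 2) / (b n) ^ 4 -
          (43 / 3 + 14 * x + 6 * x ^ 2 + 4 / 3 * x ^ 3) / (b n) ^ 6)|
      ≤ C / (b n) ^ 8 := by
  have hinv : Tendsto (fun n => (b n ^ 2)⁻¹) atTop (𝓝[>] 0) :=
    tendsto_inv_atTop_nhdsGT_zero.comp <| (tendsto_pow_atTop two_ne_zero).comp <|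
      tendsto_atTop_of_two_pi_mul_sq_mul_exp_sq_eq hb
  obtain ⟨C, hC, hbound⟩ := ((isBigO_rescaledTail_sub x).comp_tendsto hinv).exists_pos
  refine ⟨C, hC, eventually_atTop.1 ?_⟩
  filter_upwards [hbound.bound,
    (hinv.mono_right nhdsWithin_le_nhds).eventually (eventually_sqNormRatio_pos x),
    eventually_ge_atTop 1] with n hn_bound hw hn
  obtain ⟨hpos, hbn⟩ := hb n hn
  have hsq : c n * x + d n = b n ^ 2 * sqNormRatio x (b n ^ 2)⁻¹ := by
    rw [hc, hd, sqNormRatio]; field_simp; ring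
  refine ⟨by rw [hsq]; positivity, ?_⟩
  rw [hh, ← Real.sqrt_eq_rpow, hsq,
    mul_exp_mul_one_sub_stdNormalCDF_eq_rescaledTail hpos n.cast_nonneg hbn hw]
  simpa [← inv_pow, ← pow_mul, div_eq_mul_inv, abs_of_pos hpos] using hn_bound
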